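/- Let ε = i ∈ ℂ (a primitive fourth root of unity), and let g(X,Z) = ((1−ε)/2)Z³ + ((1+ε)/2)Z − (Z⁴ − 1)·(Z/4)·(3·((1−ε)/2)Z² + (1+ε)/2) + (1/2)XZ² ∈ ℂ[X,Z]. Let B = ℂ[x,y,z,t,w]/(xy − z² + 1, xt − y² + 1) and set f = (z + y)/2 + ε(y − z)/2 ∈ B. Then there exists a ℂ-algebra isomorphism Φ : ℂ[X,Y,Z,W]/(XY − Z⁴ + 1) → B such that Φ(X̄) = x, Φ(Z̄) = f + xw, x · Φ(Ȳ) = (f + xw)⁴ − 1, and x² · Φ(W̄) = z − g(x, f + xw). In particular, the cylinder over the double Danielewski surface {xy = z² − 1, xt = y² − 1} is isomorphic to the cylinder over the classical Danielewski surface xy = z⁴ − 1. -/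

import Mathlib

open MvPolynomial

/-- The polynomial ring `ℂ[X,Y,Z,W]` with `X 0 = X`, `X 1 = Y`, `X 2 = Z`, `X 3 = W`. -/
abbrev R4 : Type := MvPolynomial (Fin 4) ℂ

/-- The coordinate ring of the cylinder over the classical Danielewski surface
`xy = z⁴ - 1`. -/
abbrev WRing : Type := R4 ⧸ Ideal.span {(X 0 : R4) * X 1 - X 2 ^ 4 + 1}

noncomputable abbrev wMk : R4 →+* WRing :=
  Ideal.Quotient.mk _

/-- The coordinate ring `ℂ[x,y,z,t,w]/(xy − z² + 1, xt − y² + 1)` of the cylinder over the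
double Danielewski surface `{xy = z² − 1, xt = y² − 1}`.
Variables: `X 0 = x`, `X 1 = y`, `X 2 = z`, `X 3 = t`, `X 4 = w`. -/
abbrev DRing : Type :=
  MvPolynomial (Fin 5) ℂ ⧸
    Ideal.span {(X 0 : MvPolynomial (Fin 5) ℂ) * X 1 - X 2 ^ 2 + 1,
      (X 0 : MvPolynomial (Fin 5) ℂ) * X 3 - X 1 ^ 2 + 1}

noncomputable abbrev dMk : MvPolynomial (Fin 5) ℂ →+* DRing :=
  Ideal.Quotient.mk _

/-- `f = (z + y)/2 + ε(y − z)/2 ∈ B`, where `ε = i`. -/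
noncomputable def fElem : DRing :=
  (1 / 2 : ℂ) • (dMk (X 2) + dMk (X 1)) + (Complex.I / 2 : ℂ) • (dMk (X 1) - dMk (X 2))

/-- Evaluation of `g(X,Z) = ((1−ε)/2)Z³ + ((1+ε)/2)Z − (Z⁴−1)·(Z/4)·(3((1−ε)/2)Z² + (1+ε)/2)
+ (1/2)XZ²` at elements `u`, `v` of `B`, where `ε = i`. -/
noncomputable def gElem (u v : DRing) : DRing :=
  ((1 - Complex.I) / 2 : ℂ) • v ^ 3 + ((1 + Complex.I) / 2 : ℂ) • v
    - (v ^ 4 - 1) * ((1 / 4 : ℂ) • v) *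
        ((3 * (1 - Complex.I) / 2 : ℂ) • v ^ 2 + algebraMap ℂ DRing ((1 + Complex.I) / 2))
    + (1 / 2 : ℂ) • (u * v ^ 2)

/-!
Put `α = (1 - ε)/2` and `β = (1 + ε)/2`. The fibre over `x = 0` of the double Danielewski surface
has four components, `(y, z) = (±1, ±1)`, and `f = αz + βy` takes the four values `ζ` with `ζ⁴ = 1`
on them, with inverse `z = αζ³ + βζ`, `y = αζ + βζ³`. So `v = f + xw` satisfies `x ∣ v⁴ - 1`, and
one Newton step from `v` towards the fourth root of unity `ζ`, together with the first-order term of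
`z² = 1 + xy`, approximates `z` by `g(x, v)` modulo `x²`. Dividing out gives a map between the
cylinders which exchanges `(x, v, z)` with `(X, Z, g(X, Z) + X²W)`; since `x` is a non-zero-divisor
on both sides, these three elements determine an algebra map, so its inverse can be written down in
the same way.
-/

namespace DoubleDanielewski

section Interpolation

variable {A B : Type*} [CommRing A] [CommRing B]

/-- The pairs `α = (1 - ε)/2`, `β = (1 + ε)/2` with `ε² = -1`, characterised without denominators:
`ε = β - α`, `1/2 = αβ` and `1/4 = (αβ)²`. -/
structure IsGaussianPair (α β : A) : Prop where
  add_eq_one : α + β = 1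
  two_mul_mul_eq_one : 2 * (α * β) = 1

/-- The linear form `f = αz + βy`, which separates the four components `(y, z) = (±1, ±1)` of the
fibre `x = 0` of the double Danielewski surface. -/
def separator (α β y z : A) : A := α * z + β * y

/-- The cubic `αv³ + βv`, which interpolates the sign `z` of a component of the fibre `x = 0` from
the fourth root of unity `v` attached to that component by `separator`. With `α` and `β` exchanged
it interpolates `y`. -/
def signCubic (α β v : A) : A := α * v ^ 3 + β * v

/-- The polynomial `g(x, v)`, which gives the coordinate `z` modulo `x²`. -/
def secondOrderSign (α β x v : A) : A :=
  signCubic α β v - (v ^ 4 - 1) * ((α * β) ^ 2 * v) * (3 * α * v ^ 2 + β) + α * β * (x * v ^ 2)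

variable {F : Type*} [FunLike F A B] [RingHomClass F A B] {α β : A}

lemma map_separator (φ : F) (y z : A) :
    φ (separator α β y z) = separator (φ α) (φ β) (φ y) (φ z) := by
  simp only [separator, map_add, map_mul]

lemma map_secondOrderSign (φ : F) (x v : A) :
    φ (secondOrderSign α β x v) = secondOrderSign (φ α) (φ β) (φ x) (φ v) := by
  simp only [secondOrderSign, signCubic, map_add, map_sub, map_mul, map_pow, map_one, map_ofNat]

namespace IsGaussianPair

lemma symm (h : IsGaussianPair α β) : IsGaussianPair β α :=
  ⟨by rw [add_comm, h.add_eq_one], by rw [mul_comm β, h.two_mul_mul_eq_one]⟩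

lemma map (h : IsGaussianPair α β) (φ : A →+* B) : IsGaussianPair (φ α) (φ β) :=
  ⟨by rw [← map_add, h.add_eq_one, map_one],
    by simpa only [map_mul, map_ofNat, map_one] using congrArg φ h.two_mul_mul_eq_one⟩

lemma sq_add_sq (h : IsGaussianPair α β) : α ^ 2 + β ^ 2 = 0 := by
  linear_combination (α + β + 1) * h.add_eq_one - h.two_mul_mul_eq_one

lemma signCubic_sq (h : IsGaussianPair α β) (v : A) :
    signCubic α β v ^ 2 = 1 + (v ^ 4 - 1) * (α ^ 2 * v ^ 2 + 1) := by
  rw [signCubic]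
  linear_combination v ^ 2 * h.sq_add_sq + v ^ 4 * h.two_mul_mul_eq_one

lemma separator_signCubic (h : IsGaussianPair α β) (v : A) :
    separator α β (signCubic β α v) (signCubic α β v) = v := by
  rw [separator, signCubic, signCubic]
  linear_combination v ^ 3 * h.sq_add_sq + v * h.two_mul_mul_eq_one

end IsGaussianPair

end Interpolation

section Points

variable {A : Type*} [CommRing A] {α β x y z t : A}

lemma sq_separator_add_mul (h : IsGaussianPair α β) (hz : x * y = z ^ 2 - 1)
    (hy : x * t = y ^ 2 - 1) (w : A) :
    (separator α β y z + x * w) ^ 2 =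
      y * z + x * (α ^ 2 * (y - t) + 2 * separator α β y z * w + x * w ^ 2) := by
  rw [separator]
  linear_combination y * z * h.two_mul_mul_eq_one + y ^ 2 * h.sq_add_sq - α ^ 2 * hz + α ^ 2 * hy

lemma pow_four_sub_one_of_sq_eq (hz : x * y = z ^ 2 - 1) (hy : x * t = y ^ 2 - 1) {v m : A}
    (hv : v ^ 2 = y * z + x * m) :
    v ^ 4 - 1 = x * (t + y + 2 * (y * z) * m + x * (t * y + m ^ 2)) := by
  linear_combination (v ^ 2 + y * z + x * m) * hv - y ^ 2 * hz - (1 + x * y) * hy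

lemma dvd_separator_add_mul_pow_four_sub_one (h : IsGaussianPair α β) (hz : x * y = z ^ 2 - 1)
    (hy : x * t = y ^ 2 - 1) (w : A) : x ∣ (separator α β y z + x * w) ^ 4 - 1 :=
  ⟨_, pow_four_sub_one_of_sq_eq hz hy (sq_separator_add_mul h hz hy w)⟩

lemma sq_dvd_sub_secondOrderSign (h : IsGaussianPair α β) (hz : x * y = z ^ 2 - 1)
    (hy : x * t = y ^ 2 - 1) (w : A) :
    x ^ 2 ∣ z - secondOrderSign α β x (separator α β y z + x * w) := by
  have sq_eq := sq_separator_add_mul h hz hy w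
  set m := α ^ 2 * (y - t) + 2 * separator α β y z * w + x * w ^ 2 with hm
  set v := separator α β y z + x * w with hv
  have pow_four_eq := pow_four_sub_one_of_sq_eq hz hy sq_eq
  set p := t + y + 2 * (y * z) * m + x * (t * y + m ^ 2) with hp
  rw [separator] at hm hv
  set c := α * y ^ 2 + β * t * z + y * z * w + v * m with hc
  have cube_eq : v ^ 3 = α * y + β * z + x * c := by
    rw [hc]
    linear_combination v * sq_eq + y * z * hv - α * y * hz - β * z * hy
  have signCubic_eq : signCubic α β v = z + x * (α * c + β * w) := by
    rw [signCubic]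
    linear_combination α * cube_eq + β * hv + y * h.sq_add_sq + z * h.two_mul_mul_eq_one
  have newton_eq : v * (3 * α * v ^ 2 + β) = 2 * (α ^ 2 * y + z) + x * (3 * α * c + β * w) := by
    linear_combination 3 * α * cube_eq + β * hv + y * h.sq_add_sq + 2 * z * h.two_mul_mul_eq_one
  -- Cancellation of the terms of first order in `x` in `z - g(x, v)`.
  have first_order_eq : α * β * (p * (α ^ 2 * y + z) - y * z) - (α * c + β * w) =
      x * (α * β * (t * y + m ^ 2) * (α ^ 2 * y + z) + (α ^ 2 * t * z + y ^ 2 - α * w) * m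
        + α * β * y * w ^ 2 + β * t * w) := by
    linear_combination α * β * (α ^ 2 * y + z) * hp + α * β * y * hm - α * hc - α * m * hv
      + (y * z * m * (α ^ 2 * y + z) + α ^ 2 * y ^ 2 - y * m + y * w * (α * z + β * y))
        * h.two_mul_mul_eq_one
      - m * y * hz - (α ^ 2 * m * z + β * w) * hy
  refine ⟨α * β * (t * y + m ^ 2) * (α ^ 2 * y + z) + (α ^ 2 * t * z + y ^ 2 - α * w) * m
        + α * β * y * w ^ 2 + β * t * w + (α * β) ^ 2 * p * (3 * α * c + β * w) - α * β * m, ?_⟩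
  rw [secondOrderSign]
  linear_combination -signCubic_eq + (α * β) ^ 2 * v * (3 * α * v ^ 2 + β) * pow_four_eq
    + (α * β) ^ 2 * x * p * newton_eq - α * β * x * sq_eq
    + α * β * x * p * (α ^ 2 * y + z) * h.two_mul_mul_eq_one + x * first_order_eq

lemma exists_double_of_classical {Y Z : A} (h : IsGaussianPair α β) (hXY : x * Y = Z ^ 4 - 1)
    (W : A) :
    ∃ y t w : A, x * y = (secondOrderSign α β x Z + x ^ 2 * W) ^ 2 - 1 ∧ x * t = y ^ 2 - 1 ∧
      separator α β y (secondOrderSign α β x Z + x ^ 2 * W) + x * w = Z := by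
  -- `m` and `s` are the errors `(z - signCubic α β Z)/x` and `(y - signCubic β α Z)/x`, where
  -- `y = (z² - 1)/x`; likewise `t = (y² - 1)/x` and `w = (Z - f)/x`.
  set m := α * β * Z ^ 2 + x * W - Y * ((α * β) ^ 2 * Z) * (3 * α * Z ^ 2 + β) with hm
  set s := α * Y * Z - α * β * Y ^ 2 * (3 * α ^ 2 * Z ^ 2 + 2) + 2 * W * signCubic α β Z + m ^ 2
    with hs
  have z_eq : secondOrderSign α β x Z + x ^ 2 * W = signCubic α β Z + x * m := by
    rw [secondOrderSign, ← hXY, hm]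
    ring
  have y_eq : Y * (α ^ 2 * Z ^ 2 + 1) + 2 * signCubic α β Z * m + x * m ^ 2 =
      signCubic β α Z + x * s := by
    rw [hs, hm, signCubic, signCubic]
    linear_combination
      (Z ^ 2 * (α * Z ^ 3 + β * Z) - α * β * Y * Z * (3 * α * Z ^ 2 + β) * (α * Z ^ 3 + β * Z)
        - 2 * α * β * x * Y ^ 2 - α ^ 2 * Y * Z ^ 2 - Y * (2 * α * β + 1)) * h.two_mul_mul_eq_one
      + (α * β * Y * (3 * α ^ 2 * Z ^ 2 + 4 * α * β) - α * Z) * hXY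
      - α * β * Y * Z ^ 2 * h.sq_add_sq
  rw [z_eq]
  refine ⟨signCubic β α Z + x * s,
    Y * (β ^ 2 * Z ^ 2 + 1) + 2 * signCubic β α Z * s + x * s ^ 2, -(α * m + β * s), ?_, ?_, ?_⟩
  · rw [← y_eq]
    linear_combination (α ^ 2 * Z ^ 2 + 1) * hXY - h.signCubic_sq Z
  · linear_combination (β ^ 2 * Z ^ 2 + 1) * hXY - h.symm.signCubic_sq Z
  · have := h.separator_signCubic Z
    rw [separator] at this ⊢
    linear_combination this

end Points

section Regular

lemma map_eq_of_map_mul_eq {M N F : Type*} [Mul M] [Mul N] [FunLike F M N] [MulHomClass F M N]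
    {φ ψ : F} {x a : M} (hreg : IsLeftRegular (ψ x)) (hx : φ x = ψ x)
    (h : φ (x * a) = ψ (x * a)) : φ a = ψ a :=
  hreg <| by simpa only [map_mul, hx] using h

variable {R σ : Type*} [CommRing R]

lemma isSMulRegular_quotient_span_insert_mul_sub {x p : R} {s : Set R}
    (hx : IsSMulRegular (R ⧸ Ideal.span s) x)
    (hp : IsSMulRegular (R ⧸ Ideal.span (insert x s)) p) (u : R) :
    IsSMulRegular (R ⧸ Ideal.span (insert (x * u - p) s)) x := by
  rw [isSMulRegular_quotient_iff_mem_of_smul_mem] at hx hp ⊢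
  intro r hr
  obtain ⟨c, i, hi, hr⟩ := Ideal.mem_span_insert.1 hr
  rw [smul_eq_mul] at hr
  have hcp : p • c ∈ Ideal.span (insert x s) :=
    Ideal.mem_span_insert.2 ⟨c * u - r, i, hi, by rw [smul_eq_mul]; linear_combination hr⟩
  obtain ⟨d, j, hj, rfl⟩ := Ideal.mem_span_insert.1 (hp c hcp)
  refine Ideal.mem_span_insert.2 ⟨d, r - d * (x * u - p), hx _ ?_, by ring⟩
  have : x • (r - d * (x * u - p)) = (x * u - p) * j + i := by
    rw [smul_eq_mul]
    linear_combination hr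
  exact this ▸ add_mem (Ideal.mul_mem_left _ _ hj) hi

lemma isSMulRegular_quotient_span_aeval_X {i : σ} {s : Set (MvPolynomial σ R)}
    (hs : s ⊆ supported R {i}ᶜ) {P : Polynomial R} (hP : P.Monic) :
    IsSMulRegular (MvPolynomial σ R ⧸ Ideal.span s)
      (Polynomial.aeval (X i : MvPolynomial σ R) P) := by
  classical
  -- No element of `s` involves `X i`, so the quotient is a polynomial ring in the class of `X i`,
  -- in which the monic `P` is regular; `τ` and `eval_τ` are the part of this that is needed.
  let π : MvPolynomial σ R →ₐ[R] MvPolynomial σ R ⧸ Ideal.span s := Ideal.Quotient.mkₐ R _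
  let τ : MvPolynomial σ R →ₐ[R] Polynomial (MvPolynomial σ R ⧸ Ideal.span s) :=
    aeval (Function.update (fun j ↦ Polynomial.C (π (X j))) i Polynomial.X)
  have eqOn_supported : Set.EqOn τ (Polynomial.CAlgHom.comp π) (supported R {i}ᶜ) := by
    refine AlgHom.eqOn_adjoin_iff.2 ?_
    rintro _ ⟨j, hj, rfl⟩
    simp [τ, Function.update_of_ne hj]
  have span_le_ker : Ideal.span s ≤ RingHom.ker τ := by
    refine Ideal.span_le.2 fun q hq ↦ ?_
    have : π q = 0 := Ideal.Quotient.eq_zero_iff_mem.2 (Ideal.subset_span hq)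
    simp [eqOn_supported (hs hq), this]
  have eval_τ (q : MvPolynomial σ R) : (τ q).eval (π (X i)) = π q := by
    let ev := (Polynomial.aeval (R := MvPolynomial σ R ⧸ Ideal.span s) (π (X i))).restrictScalars R
    suffices ev.comp τ = π from DFunLike.congr_fun this q
    ext j
    by_cases hj : j = i <;> simp [ev, τ, hj]
  have τ_aeval : τ (Polynomial.aeval (X i) P) = P.map (algebraMap R _) := by
    rw [← Polynomial.aeval_algHom_apply]
    simp [τ, Polynomial.aeval_X_left_eq_map]
  rw [isSMulRegular_quotient_iff_mem_of_smul_mem]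
  intro q hq
  have τ_q : τ q = 0 := by
    refine (hP.map (algebraMap R _)).isRegular.left.mul_left_eq_zero_iff.1 ?_
    rw [← τ_aeval, ← map_mul]
    exact span_le_ker hq
  have π_q : π q = 0 := by rw [← eval_τ, τ_q, Polynomial.eval_zero]
  exact Ideal.Quotient.eq_zero_iff_mem.1 π_q

lemma isSMulRegular_quotient_span_insert_X_mul_sub_X_pow_add_one {i j : σ} (hij : j ≠ i)
    {s : Set (MvPolynomial σ R)} (hs : s ⊆ supported R {i}ᶜ) {n : ℕ} (hn : n ≠ 0)
    (hX : IsSMulRegular (MvPolynomial σ R ⧸ Ideal.span s) (X j : MvPolynomial σ R))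
    (u : MvPolynomial σ R) :
    IsSMulRegular (MvPolynomial σ R ⧸ Ideal.span (insert (X j * u - X i ^ n + 1) s))
      (X j : MvPolynomial σ R) := by
  have h_pow : IsSMulRegular (MvPolynomial σ R ⧸ Ideal.span (insert (X j) s))
      (X i ^ n - 1 : MvPolynomial σ R) := by
    simpa only [map_sub, map_pow, Polynomial.aeval_X, Polynomial.aeval_C, map_one] using
      isSMulRegular_quotient_span_aeval_X
        (Set.insert_subset (Algebra.subset_adjoin ⟨j, hij, rfl⟩) hs)
        (Polynomial.monic_X_pow_sub_C (1 : R) hn)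
  rw [sub_add]
  exact isSMulRegular_quotient_span_insert_mul_sub hX h_pow u

lemma isSMulRegular_quotient_span_empty_X (i : σ) :
    IsSMulRegular (MvPolynomial σ R ⧸ Ideal.span (∅ : Set (MvPolynomial σ R)))
      (X i : MvPolynomial σ R) := by
  simpa only [Polynomial.aeval_X] using
    isSMulRegular_quotient_span_aeval_X (R := R) (i := i) (Set.empty_subset _) Polynomial.monic_X

end Regular

section Cylinders

variable (R : Type*) [CommRing R]

/-- The coordinate ring `R[X,Y,Z,W]/(XY - Z⁴ + 1)` of the cylinder over the classical Danielewski
surface `XY = Z⁴ - 1`, with the variables numbered `X, Y, Z, W`. -/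
abbrev ClassicalCylinder : Type _ :=
  MvPolynomial (Fin 4) R ⧸
    Ideal.span {(X 0 : MvPolynomial (Fin 4) R) * X 1 - X 2 ^ 4 + 1}

/-- The coordinate ring `R[x,y,z,t,w]/(xy - z² + 1, xt - y² + 1)` of the cylinder over the double
Danielewski surface, with the variables numbered `x, y, z, t, w`. -/
abbrev DoubleCylinder : Type _ :=
  MvPolynomial (Fin 5) R ⧸
    Ideal.span {(X 0 : MvPolynomial (Fin 5) R) * X 1 - X 2 ^ 2 + 1,
      (X 0 : MvPolynomial (Fin 5) R) * X 3 - X 1 ^ 2 + 1}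

variable {R}
variable {A : Type*} [CommRing A] [Algebra R A]

namespace ClassicalCylinder

/-- The residue class of the `i`-th variable, in the order `X, Y, Z, W`. -/
noncomputable abbrev coord (i : Fin 4) : ClassicalCylinder R := Ideal.Quotient.mk _ (X i)

lemma coord_relation : (coord 0 * coord 1 : ClassicalCylinder R) = coord 2 ^ 4 - 1 := by
  rw [← sub_eq_zero, ← sub_add]
  exact Ideal.Quotient.eq_zero_iff_mem.2 (Ideal.mem_span_singleton_self _)

/-- The algebra map given by an `A`-valued point `(X, Y, Z, W)` of the classical cylinder. -/
noncomputable def lift (x y z w : A) (h : x * y = z ^ 4 - 1) :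
    ClassicalCylinder R →ₐ[R] A :=
  Ideal.Quotient.liftₐ _ (aeval ![x, y, z, w]) fun q hq ↦ by
    obtain ⟨c, rfl⟩ := Ideal.mem_span_singleton.1 hq
    simp [h]

lemma lift_coord (x y z w : A) (h : x * y = z ^ 4 - 1) (i : Fin 4) :
    lift (R := R) x y z w h (coord i) = ![x, y, z, w] i :=
  aeval_X _ i

lemma isLeftRegular_coord_zero : IsLeftRegular (coord 0 : ClassicalCylinder R) := by
  have h := isSMulRegular_quotient_span_insert_X_mul_sub_X_pow_add_one (i := 2) (by decide)
    (Set.empty_subset _) four_ne_zero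
    (isSMulRegular_quotient_span_empty_X (R := R) (σ := Fin 4) 0) (X 1)
  rw [insert_empty_eq] at h
  exact isLeftRegular_iff.2 ((isSMulRegular_algebraMap_iff _).2 h)

/-- The element `g(X, Z) + X²W`, which the isomorphism carries to the coordinate `z` of the double
Danielewski surface. -/
noncomputable def doubleZ (α β : R) : ClassicalCylinder R :=
  secondOrderSign (algebraMap R _ α) (algebraMap R _ β) (coord 0) (coord 2) +
    coord 0 ^ 2 * coord 3

lemma algHom_ext_of_isLeftRegular {φ ψ : ClassicalCylinder R →ₐ[R] A} (α β : R)
    (hreg : IsLeftRegular (ψ (coord 0))) (hX : φ (coord 0) = ψ (coord 0))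
    (hZ : φ (coord 2) = ψ (coord 2)) (hdoubleZ : φ (doubleZ α β) = ψ (doubleZ α β)) : φ = ψ := by
  have hY : φ (coord 1) = ψ (coord 1) :=
    map_eq_of_map_mul_eq hreg hX <| by simp only [coord_relation, map_sub, map_pow, map_one, hZ]
  have hW : φ (coord 3) = ψ (coord 3) := by
    refine map_eq_of_map_mul_eq hreg hX <| map_eq_of_map_mul_eq hreg hX ?_
    simpa [doubleZ, map_secondOrderSign, hX, hZ, pow_two, mul_assoc] using hdoubleZ
  refine Ideal.Quotient.algHom_ext _ (MvPolynomial.algHom_ext fun i ↦ ?_)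
  fin_cases i
  exacts [hX, hY, hZ, hW]

end ClassicalCylinder

namespace DoubleCylinder

/-- The residue class of the `i`-th variable, in the order `x, y, z, t, w`. -/
noncomputable abbrev coord (i : Fin 5) : DoubleCylinder R := Ideal.Quotient.mk _ (X i)

lemma coord_relation_z : (coord 0 * coord 1 : DoubleCylinder R) = coord 2 ^ 2 - 1 := by
  rw [← sub_eq_zero, ← sub_add]
  exact Ideal.Quotient.eq_zero_iff_mem.2 (Ideal.subset_span (Or.inl rfl))

lemma coord_relation_y : (coord 0 * coord 3 : DoubleCylinder R) = coord 1 ^ 2 - 1 := by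
  rw [← sub_eq_zero, ← sub_add]
  exact Ideal.Quotient.eq_zero_iff_mem.2 (Ideal.subset_span (Or.inr rfl))

/-- The algebra map given by an `A`-valued point `(x, y, z, t, w)` of the double Danielewski
cylinder. -/
noncomputable def lift (x y z t w : A) (hz : x * y = z ^ 2 - 1) (hy : x * t = y ^ 2 - 1) :
    DoubleCylinder R →ₐ[R] A :=
  Ideal.Quotient.liftₐ _ (aeval ![x, y, z, t, w]) fun q hq ↦ by
    obtain ⟨c, d, rfl⟩ := Ideal.mem_span_pair.1 hq
    simp [hz, hy]

lemma lift_coord (x y z t w : A) (hz : x * y = z ^ 2 - 1) (hy : x * t = y ^ 2 - 1) (i : Fin 5) :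
    lift (R := R) x y z t w hz hy (coord i) = ![x, y, z, t, w] i :=
  aeval_X _ i

lemma isLeftRegular_coord_zero : IsLeftRegular (coord 0 : DoubleCylinder R) := by
  have h_y := isSMulRegular_quotient_span_insert_X_mul_sub_X_pow_add_one (i := 1) (by decide)
    (Set.empty_subset _) two_ne_zero
    (isSMulRegular_quotient_span_empty_X (R := R) (σ := Fin 5) 0) (X 3)
  rw [insert_empty_eq] at h_y
  have X_mem {j : Fin 5} (hj : j ≠ 2) : X j ∈ supported R ({2}ᶜ : Set (Fin 5)) :=
    Algebra.subset_adjoin ⟨j, hj, rfl⟩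
  have h_supported : X 0 * X 3 - X 1 ^ 2 + 1 ∈ supported R ({2}ᶜ : Set (Fin 5)) :=
    add_mem (sub_mem (mul_mem (X_mem (by decide)) (X_mem (by decide)))
      (pow_mem (X_mem (by decide)) 2)) (one_mem _)
  have h_z := isSMulRegular_quotient_span_insert_X_mul_sub_X_pow_add_one (i := 2) (by decide)
    (Set.singleton_subset_iff.2 h_supported) two_ne_zero h_y (X 1)
  exact isLeftRegular_iff.2 ((isSMulRegular_algebraMap_iff _).2 h_z)

/-- The element `v = f + xw`, which the isomorphism matches with the coordinate `Z` of the classical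
Danielewski surface. -/
noncomputable def classicalZ (α β : R) : DoubleCylinder R :=
  separator (algebraMap R _ α) (algebraMap R _ β) (coord 1) (coord 2) + coord 0 * coord 4

lemma algHom_ext_of_isLeftRegular {φ ψ : DoubleCylinder R →ₐ[R] A} (α β : R)
    (hreg : IsLeftRegular (ψ (coord 0))) (hx : φ (coord 0) = ψ (coord 0))
    (hz : φ (coord 2) = ψ (coord 2)) (hclassicalZ : φ (classicalZ α β) = ψ (classicalZ α β)) :
    φ = ψ := by
  have hy : φ (coord 1) = ψ (coord 1) :=
    map_eq_of_map_mul_eq hreg hx <| by simp only [coord_relation_z, map_sub, map_pow, map_one, hz]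
  have ht : φ (coord 3) = ψ (coord 3) :=
    map_eq_of_map_mul_eq hreg hx <| by simp only [coord_relation_y, map_sub, map_pow, map_one, hy]
  have hw : φ (coord 4) = ψ (coord 4) := by
    refine map_eq_of_map_mul_eq hreg hx ?_
    simpa [classicalZ, map_separator, hx, hy, hz] using hclassicalZ
  refine Ideal.Quotient.algHom_ext _ (MvPolynomial.algHom_ext fun i ↦ ?_)
  fin_cases i
  exacts [hx, hy, hz, ht, hw]

end DoubleCylinder

variable {α β : R}

open ClassicalCylinder (doubleZ)
open DoubleCylinder (classicalZ)

lemma exists_algHom_classical_double (h : IsGaussianPair α β) :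
    ∃ Φ : ClassicalCylinder R →ₐ[R] DoubleCylinder R,
      Φ (ClassicalCylinder.coord 0) = DoubleCylinder.coord 0 ∧
      Φ (ClassicalCylinder.coord 2) = classicalZ α β ∧
      Φ (doubleZ α β) = DoubleCylinder.coord 2 := by
  have h' := h.map (algebraMap R (DoubleCylinder R))
  obtain ⟨p, hp⟩ := dvd_separator_add_mul_pow_four_sub_one h' DoubleCylinder.coord_relation_z
    DoubleCylinder.coord_relation_y (DoubleCylinder.coord 4)
  obtain ⟨r, hr⟩ := sq_dvd_sub_secondOrderSign h' DoubleCylinder.coord_relation_z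
    DoubleCylinder.coord_relation_y (DoubleCylinder.coord 4)
  refine ⟨ClassicalCylinder.lift _ p _ r hp.symm, ClassicalCylinder.lift_coord ..,
    ClassicalCylinder.lift_coord .., ?_⟩
  simp [doubleZ, map_secondOrderSign, ClassicalCylinder.lift_coord, ← hr]

lemma exists_algHom_double_classical (h : IsGaussianPair α β) :
    ∃ Ψ : DoubleCylinder R →ₐ[R] ClassicalCylinder R,
      Ψ (DoubleCylinder.coord 0) = ClassicalCylinder.coord 0 ∧
      Ψ (DoubleCylinder.coord 2) = doubleZ α β ∧
      Ψ (classicalZ α β) = ClassicalCylinder.coord 2 := by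
  obtain ⟨y, t, w, hz, hy, hw⟩ := exists_double_of_classical
    (h.map (algebraMap R (ClassicalCylinder R))) ClassicalCylinder.coord_relation
    (ClassicalCylinder.coord 3)
  refine ⟨DoubleCylinder.lift _ y _ t w hz hy, DoubleCylinder.lift_coord ..,
    DoubleCylinder.lift_coord .., ?_⟩
  simpa [classicalZ, map_separator, DoubleCylinder.lift_coord] using hw

end Cylinders

lemma isGaussianPair_complex : IsGaussianPair ((1 - Complex.I) / 2) ((1 + Complex.I) / 2) where
  add_eq_one := by ring
  two_mul_mul_eq_one := by linear_combination (-1 / 2 : ℂ) * Complex.I_sq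

lemma fElem_eq_separator :
    fElem = separator (algebraMap ℂ DRing ((1 - Complex.I) / 2))
      (algebraMap ℂ DRing ((1 + Complex.I) / 2)) (dMk (X 1)) (dMk (X 2)) := by
  simp only [fElem, separator, ← Algebra.smul_def]
  module

lemma gElem_eq_secondOrderSign (u v : DRing) :
    gElem u v = secondOrderSign (algebraMap ℂ DRing ((1 - Complex.I) / 2))
      (algebraMap ℂ DRing ((1 + Complex.I) / 2)) u v := by
  have half_eq : (1 / 2 : ℂ) = (1 - Complex.I) / 2 * ((1 + Complex.I) / 2) := by
    linear_combination (1 / 4 : ℂ) * Complex.I_sq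
  have quarter_eq : (1 / 4 : ℂ) = ((1 - Complex.I) / 2 * ((1 + Complex.I) / 2)) ^ 2 := by
    rw [← half_eq]
    norm_num
  have smul_eq (c : ℂ) (q : DRing) : c • q = algebraMap ℂ DRing c * q := Algebra.smul_def c q
  rw [gElem, half_eq, quarter_eq, mul_div_assoc]
  simp only [secondOrderSign, signCubic, smul_eq, map_mul, map_pow, map_ofNat]

end DoubleDanielewski

open DoubleDanielewski in
theorem cylinder_over_double_Danielewski_surface_explicit_iso_general {R : Type*} [CommRing R]
    {α β : R} (h : IsGaussianPair α β) :
    ∃ Φ : ClassicalCylinder R ≃ₐ[R] DoubleCylinder R,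
      Φ (ClassicalCylinder.coord 0) = DoubleCylinder.coord 0 ∧
      Φ (ClassicalCylinder.coord 2) = DoubleCylinder.classicalZ α β ∧
      DoubleCylinder.coord 0 * Φ (ClassicalCylinder.coord 1) =
        DoubleCylinder.classicalZ α β ^ 4 - 1 ∧
      DoubleCylinder.coord 0 ^ 2 * Φ (ClassicalCylinder.coord 3) =
        DoubleCylinder.coord 2 - secondOrderSign (algebraMap R _ α) (algebraMap R _ β)
          (DoubleCylinder.coord 0) (DoubleCylinder.classicalZ α β) := by
  obtain ⟨Φ, Φ_X, Φ_Z, Φ_doubleZ⟩ := exists_algHom_classical_double h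
  obtain ⟨Ψ, Ψ_x, Ψ_z, Ψ_classicalZ⟩ := exists_algHom_double_classical h
  have Φ_comp_Ψ : Φ.comp Ψ = AlgHom.id R (DoubleCylinder R) :=
    DoubleCylinder.algHom_ext_of_isLeftRegular α β DoubleCylinder.isLeftRegular_coord_zero
      (by simp [Ψ_x, Φ_X]) (by simp [Ψ_z, Φ_doubleZ]) (by simp [Ψ_classicalZ, Φ_Z])
  have Ψ_comp_Φ : Ψ.comp Φ = AlgHom.id R (ClassicalCylinder R) :=
    ClassicalCylinder.algHom_ext_of_isLeftRegular α β ClassicalCylinder.isLeftRegular_coord_zero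
      (by simp [Ψ_x, Φ_X]) (by simp [Ψ_classicalZ, Φ_Z]) (by simp [Ψ_z, Φ_doubleZ])
  refine ⟨AlgEquiv.ofAlgHom Φ Ψ Φ_comp_Ψ Ψ_comp_Φ, Φ_X, Φ_Z, ?_, ?_⟩
  · calc DoubleCylinder.coord 0 * Φ (ClassicalCylinder.coord 1)
        = Φ (ClassicalCylinder.coord 0 * ClassicalCylinder.coord 1) := by rw [map_mul, Φ_X]
      _ = DoubleCylinder.classicalZ α β ^ 4 - 1 := by
        rw [ClassicalCylinder.coord_relation, map_sub, map_pow, map_one, Φ_Z]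
  · change DoubleCylinder.coord 0 ^ 2 * Φ (ClassicalCylinder.coord 3) = _
    rw [← Φ_doubleZ, ClassicalCylinder.doubleZ, map_add, map_secondOrderSign, map_mul, map_pow, Φ_X,
      Φ_Z, AlgHom.commutes, AlgHom.commutes, add_sub_cancel_left]

open DoubleDanielewski in
theorem cylinder_over_double_Danielewski_surface_explicit_iso :
    ∃ Φ : WRing ≃ₐ[ℂ] DRing,
      Φ (wMk (X 0)) = dMk (X 0) ∧
      Φ (wMk (X 2)) = fElem + dMk (X 0) * dMk (X 4) ∧
      dMk (X 0) * Φ (wMk (X 1)) = (fElem + dMk (X 0) * dMk (X 4)) ^ 4 - 1 ∧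
      dMk (X 0) ^ 2 * Φ (wMk (X 3)) =
        dMk (X 2) - gElem (dMk (X 0)) (fElem + dMk (X 0) * dMk (X 4)) := by
  rw [gElem_eq_secondOrderSign, fElem_eq_separator]
  exact cylinder_over_double_Danielewski_surface_explicit_iso_general isGaussianPair_complex
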